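/- The derivation module D(𝒜₂₃₈) of the central hyperplane arrangement 𝒜₂₃₈ in ℂ⁴ with defining equation Q₂₃₈ = x·y·z·w·(x+y+z−w)·(x+y−z+w)·(x−y+z+w)·(−x+y+z+w) is not a free module over S = ℂ[x,y,z,w]. -/

import Mathlib

open MvPolynomial

noncomputable section

/-- The polynomial ring `S = ℂ[x,y,z,w]`, with `x = X 0`, `y = X 1`, `z = X 2`, `w = X 3`. -/
abbrev S4 : Type := MvPolynomial (Fin 4) ℂ

/-- The linear form `c₀·x + c₁·y + c₂·z + c₃·w` with coefficient vector `c`. -/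
noncomputable def linForm (c : Fin 4 → ℂ) : S4 := ∑ i, C (c i) * X i

/-- A polynomial derivation `θ = a₁∂ₓ + a₂∂_y + a₃∂_z + a₄∂_w` of `S` is identified with
its coefficient tuple `a : Fin 4 → S`; the linear map `derMap f` sends `a` to `θ(f)`. -/
noncomputable def derMap (f : S4) : (Fin 4 → S4) →ₗ[S4] S4 where
  toFun a := ∑ i, a i * pderiv i f
  map_add' a b := by simp [add_mul, Finset.sum_add_distrib]
  map_smul' c a := by simp [Finset.mul_sum, mul_assoc]

/-- The derivation module `D(𝒜)` of the central arrangement whose hyperplanes are the kernels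
of the linear forms `linForm (α H)`: all derivations `θ` with `θ(α_H) ∈ S·α_H` for every `H`. -/
noncomputable def derivModule {ι : Type} (α : ι → (Fin 4 → ℂ)) :
    Submodule S4 (Fin 4 → S4) :=
  ⨅ H, Submodule.comap (derMap (linForm (α H))) (Ideal.span {linForm (α H)})

end

/-- The coefficient vectors of the eight linear factors of Q = xyzw(x+y+z-w)(x+y-z+w)(x-y+z+w)(-x+y+z+w), defining the rigid Cynk–Szemberg octic arrangement 𝒜₂₃₈ ⊂ ℙ³. -/
noncomputable def A238 : Fin 8 → (Fin 4 → ℂ) :=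
  ![![1, 0, 0, 0],
    ![0, 1, 0, 0],
    ![0, 0, 1, 0],
    ![0, 0, 0, 1],
    ![1, 1, 1, -1],
    ![1, 1, -1, 1],
    ![1, -1, 1, 1],
    ![-1, 1, 1, 1]]

/-!
At `p = (0 : 0 : 1 : 1)` exactly four planes of `𝒜₂₃₈` meet, in general position along the line
through `p`: a circuit `β₀ = ∑ cⱼ βⱼ` with `β₁, β₂, β₃` independent. Localizing at `p` keeps only
these four. Writing `θ(β_H) = β_H q_H`, the triple `sⱼ = cⱼ (qⱼ - q₀)` is a syzygy of the regular
sequence `β₁, β₂, β₃`, hence vanishes at `p`, so the first derivatives of the `sⱼ` at `p` depend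
only on the class of `θ` in the fibre at `p`. Together with `θ(p)` and `q₀(p)` they separate the
constant field `p`, the Euler derivation and the three Koszul syzygies. The fibre thus has dimension
at least five, while a free submodule of `S⁴` has rank at most four.
-/

open scoped Matrix

section SemilinearMap

variable {R K N P V ι : Type*} [CommRing R] [Field K] {σ : R →+* K} [AddCommGroup N] [Module R N]
  [AddCommGroup P] [Module R P] [AddCommGroup V] [Module K V] [Fintype ι]

lemma card_le_finrank_of_linearIndependent_comp [Module.Free R N] [Module.Finite R N]
    (f : N →ₛₗ[σ] V) {m : ι → N} (hm : LinearIndependent K (f ∘ m)) :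
    Fintype.card ι ≤ Module.finrank R N := by
  have : Nontrivial R := σ.domain_nontrivial
  let b := Module.Free.chooseBasis R N
  have : Module.Finite K (Submodule.span K (Set.range (f ∘ b))) :=
    Module.Finite.span_of_finite K (Set.finite_range _)
  have hspan : Submodule.span K (Set.range (f ∘ m)) ≤ Submodule.span K (Set.range (f ∘ b)) := by
    rw [Submodule.span_le]
    rintro _ ⟨j, rfl⟩
    rw [Function.comp_apply, ← b.sum_repr (m j), map_sum]
    refine Submodule.sum_mem _ fun i _ => ?_
    rw [map_smulₛₗ]
    exact Submodule.smul_mem _ _ (Submodule.subset_span ⟨i, rfl⟩)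
  calc Fintype.card ι = Module.finrank K (Submodule.span K (Set.range (f ∘ m))) :=
        (finrank_span_eq_card hm).symm
    _ ≤ Module.finrank K (Submodule.span K (Set.range (f ∘ b))) := Submodule.finrank_mono hspan
    _ ≤ Fintype.card (Module.Free.ChooseBasisIndex R N) := finrank_range_le_card _
    _ = Module.finrank R N := (Module.finrank_eq_card_basis b).symm

lemma card_le_finrank_of_smul_mem {D L : Submodule R P} [Module.Free R D] [Module.Finite R D]
    (hDL : D ≤ L) {s : R} (hs : σ s ≠ 0) (hsL : ∀ θ ∈ L, s • θ ∈ D)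
    (f : L →ₛₗ[σ] V) {m : ι → L} (hm : LinearIndependent K (f ∘ m)) :
    Fintype.card ι ≤ Module.finrank R D := by
  refine card_le_finrank_of_linearIndependent_comp (f.comp (Submodule.inclusion hDL))
    (m := fun i => ⟨s • (m i : P), hsL _ (m i).2⟩) ?_
  convert hm.units_smul fun _ => Units.mk0 (σ s) hs using 1
  ext i
  exact map_smulₛₗ f s (m i)

end SemilinearMap

section LinearForm

variable (c v p : Fin 4 → ℂ)

lemma eval_linForm : eval p (linForm c) = c ⬝ᵥ p := by
  simp [linForm, dotProduct]

lemma linForm_sum_smul {κ : Type*} [Fintype κ] (b : κ → ℂ) (a : κ → Fin 4 → ℂ) :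
    linForm (∑ j, b j • a j) = ∑ j, C (b j) * linForm (a j) := by
  simp only [linForm, Finset.sum_apply, Pi.smul_apply, smul_eq_mul, map_sum, map_mul,
    Finset.sum_mul, Finset.mul_sum, mul_assoc]
  exact Finset.sum_comm

lemma linForm_ne_zero_of_dotProduct_ne_zero {c v : Fin 4 → ℂ} (h : c ⬝ᵥ v ≠ 0) :
    linForm c ≠ 0 := by
  intro hc
  rw [← eval_linForm, hc, map_zero] at h
  exact h rfl

/-- The derivative of a polynomial in the direction of the vector `v`. -/
noncomputable def dirDeriv : Derivation ℂ S4 S4 :=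
  mkDerivation ℂ fun i => C (v i)

lemma dirDeriv_linForm : dirDeriv v (linForm c) = C (c ⬝ᵥ v) := by
  simp [dirDeriv, linForm, dotProduct, Derivation.leibniz]

lemma eval_eq_zero_of_sum_linForm_mul_eq_zero {κ : Type*} [Fintype κ] [DecidableEq κ]
    {a b : κ → Fin 4 → ℂ} (hab : ∀ i j, a i ⬝ᵥ b j = if i = j then 1 else 0)
    {p : Fin 4 → ℂ} (hp : ∀ i, a i ⬝ᵥ p = 0) {s : κ → S4}
    (hs : ∑ i, linForm (a i) * s i = 0) (j : κ) : eval p (s j) = 0 := by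
  have h := congrArg (fun f => eval p (dirDeriv (b j) f)) hs
  simpa [Derivation.leibniz, dirDeriv_linForm, eval_linForm, hab, hp, apply_ite] using h

lemma exists_dual_of_linearIndependent {κ : Type*} [Finite κ] [DecidableEq κ]
    {a : κ → Fin 4 → ℂ} (ha : LinearIndependent ℂ a) :
    ∃ b : κ → Fin 4 → ℂ, ∀ i j, a i ⬝ᵥ b j = if i = j then 1 else 0 := by
  have := Fintype.ofFinite κ
  have hrange : LinearMap.range (Matrix.of a).mulVecLin = ⊤ :=
    Submodule.eq_top_of_finrank_eq (by
      rw [Module.finrank_fintype_fun_eq_card]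
      exact LinearIndependent.rank_matrix (M := Matrix.of a) ha)
  choose b hb using fun j => LinearMap.range_eq_top.mp hrange (Pi.single j 1)
  refine ⟨b, fun i j => ?_⟩
  exact (congrFun (hb j) i).trans (Pi.single_apply j 1 i)

end LinearForm

section Derivation

/-- The derivation with constant coefficients `∑ᵢ vᵢ ∂ᵢ`. -/
noncomputable def constDer (v : Fin 4 → ℂ) : Fin 4 → S4 :=
  fun i => C (v i)

lemma derMap_linForm (c : Fin 4 → ℂ) (θ : Fin 4 → S4) :
    derMap (linForm c) θ = ∑ i, θ i * C (c i) := by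
  simp [derMap, linForm, pderiv_X, Pi.single_apply]

lemma derMap_linForm_constDer (c v : Fin 4 → ℂ) :
    derMap (linForm c) (constDer v) = C (c ⬝ᵥ v) := by
  simp [derMap_linForm, constDer, dotProduct, mul_comm]

lemma derMap_linForm_X (c : Fin 4 → ℂ) : derMap (linForm c) X = linForm c := by
  rw [derMap_linForm]
  simp only [linForm, mul_comm]

lemma derMap_linForm_sum_smul {κ : Type*} [Fintype κ] (b : κ → ℂ) (a : κ → Fin 4 → ℂ)
    (θ : Fin 4 → S4) :
    derMap (linForm (∑ j, b j • a j)) θ = ∑ j, C (b j) * derMap (linForm (a j)) θ := by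
  simp only [derMap_linForm, Finset.sum_apply, Pi.smul_apply, smul_eq_mul, map_sum, map_mul,
    Finset.mul_sum, mul_left_comm]
  exact Finset.sum_comm

variable {ι : Type} {α : ι → Fin 4 → ℂ} {θ : Fin 4 → S4}

lemma mem_derivModule_iff_dvd :
    θ ∈ derivModule α ↔ ∀ H, linForm (α H) ∣ derMap (linForm (α H)) θ := by
  simp [derivModule, Submodule.mem_iInf, Ideal.mem_span_singleton]

lemma derivModule_le_comp {κ : Type} (e : κ → ι) : derivModule α ≤ derivModule (α ∘ e) :=
  fun _ hθ => mem_derivModule_iff_dvd.mpr fun k => mem_derivModule_iff_dvd.mp hθ (e k)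

lemma exists_smul_mem_derivModule_of_mem_comp [Finite ι] {κ : Type} {e : κ → ι} {p : Fin 4 → ℂ}
    (he : ∀ H, α H ⬝ᵥ p = 0 → H ∈ Set.range e) :
    ∃ s : S4, eval p s ≠ 0 ∧ ∀ θ ∈ derivModule (α ∘ e), s • θ ∈ derivModule α := by
  classical
  have := Fintype.ofFinite ι
  refine ⟨∏ H with α H ⬝ᵥ p ≠ 0, linForm (α H), ?_, fun θ hθ => ?_⟩
  · simp [map_prod, eval_linForm, Finset.prod_ne_zero_iff]
  rw [mem_derivModule_iff_dvd] at hθ ⊢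
  intro H
  rw [map_smul, smul_eq_mul]
  by_cases hH : α H ⬝ᵥ p = 0
  · obtain ⟨k, rfl⟩ := he H hH
    exact (hθ k).mul_left _
  · have hdvd : linForm (α H) ∣ ∏ H with α H ⬝ᵥ p ≠ 0, linForm (α H) :=
      Finset.dvd_prod_of_mem (fun H => linForm (α H)) (by simpa using hH)
    exact hdvd.mul_right _

/-- The logarithmic quotients of `θ ∈ D(𝒜)`: the polynomials `θ(α_H) / α_H`. -/
noncomputable def logQuot (hα : ∀ H, linForm (α H) ≠ 0) : derivModule α →ₗ[S4] (ι → S4) :=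
  LinearMap.pi fun H =>
    (LinearEquiv.coord S4 S4 (linForm (α H)) (hα H)).toLinearMap ∘ₗ
      (derMap (linForm (α H))).restrict (p := derivModule α) (q := S4 ∙ linForm (α H))
        fun _ hθ => Ideal.mem_span_singleton.mpr (mem_derivModule_iff_dvd.mp hθ H)

lemma linForm_mul_logQuot (hα : ∀ H, linForm (α H) ≠ 0) (θ : derivModule α) (H : ι) :
    linForm (α H) * logQuot hα θ H = derMap (linForm (α H)) θ := by
  rw [mul_comm]
  exact LinearEquiv.coord_apply_smul S4 S4 _ (hα H) _

lemma logQuot_eq_of_derMap_eq (hα : ∀ H, linForm (α H) ≠ 0) {θ : derivModule α} {q : ι → S4}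
    (hq : ∀ H, derMap (linForm (α H)) θ = linForm (α H) * q H) : logQuot hα θ = q := by
  ext1 H
  apply mul_left_cancel₀ (hα H)
  rw [linForm_mul_logQuot, hq]

end Derivation

/-- Four hyperplanes through `p` whose forms `β` make up a circuit, presented by the relation
expressing `β 0` in terms of the independent forms `β 1`, `β 2`, `β 3` and by vectors dual to
those three forms. -/
structure CircuitFrame (β : Fin 4 → Fin 4 → ℂ) (p : Fin 4 → ℂ) where
  coeff : Fin 3 → ℂ
  coeff_ne_zero : ∀ j, coeff j ≠ 0
  relation : β 0 = ∑ j : Fin 3, coeff j • β j.succ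
  dual : Fin 3 → Fin 4 → ℂ
  dotProduct_dual : ∀ i j : Fin 3, β i.succ ⬝ᵥ dual j = if i = j then 1 else 0
  dotProduct_succ_point : ∀ j : Fin 3, β j.succ ⬝ᵥ p = 0

namespace CircuitFrame

variable {β : Fin 4 → Fin 4 → ℂ} {p : Fin 4 → ℂ}

lemma nonempty_of_linearIndependent (hp : ∀ j : Fin 3, β j.succ ⬝ᵥ p = 0)
    (hind : LinearIndependent ℂ fun j : Fin 3 => β j.succ) {c : Fin 3 → ℂ} (hc : ∀ j, c j ≠ 0)
    (hrel : β 0 = ∑ j, c j • β j.succ) : Nonempty (CircuitFrame β p) :=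
  have ⟨dual, hdual⟩ := exists_dual_of_linearIndependent hind
  ⟨⟨c, hc, hrel, dual, hdual, hp⟩⟩

lemma dotProduct_zero_dual (F : CircuitFrame β p) (j : Fin 3) : β 0 ⬝ᵥ F.dual j = F.coeff j := by
  simp [F.relation, sum_dotProduct, F.dotProduct_dual]

lemma dotProduct_point (F : CircuitFrame β p) (H : Fin 4) : β H ⬝ᵥ p = 0 := by
  cases H using Fin.cases with
  | zero => simp [F.relation, sum_dotProduct, F.dotProduct_succ_point]
  | succ j => exact F.dotProduct_succ_point j

lemma linForm_ne_zero (F : CircuitFrame β p) (H : Fin 4) : linForm (β H) ≠ 0 := by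
  cases H using Fin.cases with
  | zero =>
    exact linForm_ne_zero_of_dotProduct_ne_zero (v := F.dual 0)
      (by simpa only [F.dotProduct_zero_dual] using F.coeff_ne_zero 0)
  | succ j =>
    exact linForm_ne_zero_of_dotProduct_ne_zero (v := F.dual j) (by simp [F.dotProduct_dual])

variable (F : CircuitFrame β p)

/-- The syzygy `sⱼ = cⱼ (qⱼ - q₀)` of `β 1`, `β 2`, `β 3` formed from the logarithmic quotients
of a derivation. -/
noncomputable def syzygy : derivModule β →ₗ[S4] (Fin 3 → S4) where
  toFun θ j :=
    C (F.coeff j) * (logQuot F.linForm_ne_zero θ j.succ - logQuot F.linForm_ne_zero θ 0)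
  map_add' θ η := by
    ext1 j
    simp only [map_add, Pi.add_apply]
    ring
  map_smul' s θ := by
    ext1 j
    simp only [map_smul, Pi.smul_apply, smul_eq_mul, RingHom.id_apply]
    ring

lemma syzygy_apply (θ : derivModule β) (j : Fin 3) :
    F.syzygy θ j =
      C (F.coeff j) * (logQuot F.linForm_ne_zero θ j.succ - logQuot F.linForm_ne_zero θ 0) :=
  rfl

lemma sum_linForm_mul_syzygy (θ : derivModule β) :
    ∑ j, linForm (β j.succ) * F.syzygy θ j = 0 := by
  set q := logQuot F.linForm_ne_zero θ with hq
  have hβ₀ : ∑ j, C (F.coeff j) * (linForm (β j.succ) * q j.succ) = linForm (β 0) * q 0 := by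
    simp only [hq, linForm_mul_logQuot]
    rw [← derMap_linForm_sum_smul, ← F.relation]
  calc ∑ j, linForm (β j.succ) * F.syzygy θ j
      = ∑ j, C (F.coeff j) * (linForm (β j.succ) * q j.succ)
          - (∑ j, C (F.coeff j) * linForm (β j.succ)) * q 0 := by
        rw [Finset.sum_mul, ← Finset.sum_sub_distrib]
        refine Finset.sum_congr rfl fun j _ => ?_
        rw [syzygy_apply]
        ring
    _ = 0 := by rw [hβ₀, ← linForm_sum_smul, ← F.relation, sub_self]

lemma eval_syzygy (θ : derivModule β) (j : Fin 3) : eval p (F.syzygy θ j) = 0 :=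
  eval_eq_zero_of_sum_linForm_mul_eq_zero F.dotProduct_dual F.dotProduct_succ_point
    (F.sum_linForm_mul_syzygy θ) j

/-- The value `θ(p)`, the value at `p` of the logarithmic quotient `q₀`, and the Jacobian matrix
at `p` of the syzygy of `θ`. As a map semilinear over evaluation at `p`, it factors through the
fibre of the derivation module at `p`. -/
noncomputable def fibreMap :
    derivModule β →ₛₗ[eval p] (Fin 4 → ℂ) × ℂ × Matrix (Fin 3) (Fin 3) ℂ where
  toFun θ := (fun i => eval p ((θ : Fin 4 → S4) i), eval p (logQuot F.linForm_ne_zero θ 0),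
    Matrix.of fun j k => eval p (dirDeriv (F.dual k) (F.syzygy θ j)))
  map_add' θ η := by ext <;> simp
  map_smul' s θ := by
    ext <;> simp [F.eval_syzygy]

lemma exists_fibreMap_eq_of_derMap_eq {θ q : Fin 4 → S4}
    (hq : ∀ H, derMap (linForm (β H)) θ = linForm (β H) * q H) :
    ∃ η, F.fibreMap η = (fun i => eval p (θ i), eval p (q 0), Matrix.of fun j k =>
      eval p (dirDeriv (F.dual k) (C (F.coeff j) * (q j.succ - q 0)))) := by
  let η : derivModule β := ⟨θ, mem_derivModule_iff_dvd.mpr fun H => Dvd.intro _ (hq H).symm⟩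
  have hη : logQuot F.linForm_ne_zero η = q := logQuot_eq_of_derMap_eq _ hq
  exact ⟨η, by simp only [fibreMap, LinearMap.coe_mk, AddHom.coe_mk, syzygy_apply, hη, η]⟩

lemma exists_fibreMap_eq_point : ∃ θ, F.fibreMap θ = (p, 0, 0) := by
  have hq (H : Fin 4) : derMap (linForm (β H)) (constDer p) = linForm (β H) * 0 := by
    rw [derMap_linForm_constDer, F.dotProduct_point, map_zero, mul_zero]
  obtain ⟨θ, hθ⟩ := F.exists_fibreMap_eq_of_derMap_eq hq
  refine ⟨θ, hθ.trans ?_⟩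
  ext <;> simp [constDer]

lemma exists_fibreMap_eq_euler : ∃ θ, F.fibreMap θ = (p, 1, 0) := by
  have hq (H : Fin 4) : derMap (linForm (β H)) X = linForm (β H) * 1 := by
    rw [derMap_linForm_X, mul_one]
  obtain ⟨θ, hθ⟩ := F.exists_fibreMap_eq_of_derMap_eq hq
  refine ⟨θ, hθ.trans ?_⟩
  ext <;> simp

/-- The derivation whose syzygy is the Koszul relation between `β i.succ` and `β j.succ`. -/
noncomputable def koszulDer (i j : Fin 3) : Fin 4 → S4 :=
  (linForm (β i.succ) * linForm (β j.succ)) •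
    constDer ((F.coeff i)⁻¹ • F.dual i - (F.coeff j)⁻¹ • F.dual j)

/-- The logarithmic quotients of `koszulDer`. -/
noncomputable def koszulQuot (i j : Fin 3) : Fin 4 → S4 :=
  Fin.cons 0 (Pi.single i (C (F.coeff i)⁻¹ * linForm (β j.succ))
    - Pi.single j (C (F.coeff j)⁻¹ * linForm (β i.succ)))

lemma derMap_koszulDer (i j : Fin 3) (H : Fin 4) :
    derMap (linForm (β H)) (F.koszulDer i j) = linForm (β H) * F.koszulQuot i j H := by
  rw [koszulDer, map_smul, derMap_linForm_constDer, smul_eq_mul, dotProduct_sub, dotProduct_smul,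
    dotProduct_smul]
  cases H using Fin.cases with
  | zero => simp [F.dotProduct_zero_dual, F.coeff_ne_zero, koszulQuot]
  | succ k =>
    rw [F.dotProduct_dual, F.dotProduct_dual, koszulQuot, Fin.cons_succ, Pi.sub_apply,
      Pi.single_apply, Pi.single_apply]
    split_ifs <;> subst_vars <;> simp <;> ring

lemma coeff_mul_koszulQuot (i j k : Fin 3) :
    C (F.coeff k) * (F.koszulQuot i j k.succ - F.koszulQuot i j 0) =
      Pi.single (M := fun _ => S4) i (linForm (β j.succ)) k
        - Pi.single (M := fun _ => S4) j (linForm (β i.succ)) k := by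
  have hcoeff (m : Fin 3) : (C (F.coeff m) : S4) * C (F.coeff m)⁻¹ = 1 := by
    rw [← C_mul, mul_inv_cancel₀ (F.coeff_ne_zero m), C_1]
  simp only [koszulQuot, Fin.cons_succ, Fin.cons_zero, sub_zero, Pi.sub_apply, mul_sub,
    Pi.single_apply, mul_ite, mul_zero]
  split_ifs <;> subst_vars <;> simp [← mul_assoc, hcoeff]

lemma exists_fibreMap_eq_koszul (i j : Fin 3) :
    ∃ θ, F.fibreMap θ = (0, 0, Matrix.single i j 1 - Matrix.single j i 1) := by
  obtain ⟨θ, hθ⟩ := F.exists_fibreMap_eq_of_derMap_eq (F.derMap_koszulDer i j)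
  refine ⟨θ, hθ.trans ?_⟩
  ext k l
  · simp [koszulDer, eval_linForm, F.dotProduct_point]
  · simp [koszulQuot]
  · simp only [F.coeff_mul_koszulQuot, Matrix.of_apply, Matrix.sub_apply, Matrix.single_apply,
      Pi.single_apply, map_sub, apply_ite (dirDeriv _), apply_ite (eval p), map_zero,
      dirDeriv_linForm, eval_C, F.dotProduct_dual, ite_and, eq_comm]

lemma exists_linearIndependent_fibreMap (hp : p ≠ 0) :
    ∃ m : Fin 5 → derivModule β, LinearIndependent ℂ (F.fibreMap ∘ m) := by
  obtain ⟨point, hpoint⟩ := F.exists_fibreMap_eq_point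
  obtain ⟨euler, heuler⟩ := F.exists_fibreMap_eq_euler
  choose koszul hkoszul using F.exists_fibreMap_eq_koszul
  refine ⟨![point, euler, koszul 0 1, koszul 0 2, koszul 1 2], ?_⟩
  rw [Fintype.linearIndependent_iff]
  intro g hg
  simp only [Fin.sum_univ_five, Function.comp_apply, Matrix.cons_val, hpoint, heuler, hkoszul] at hg
  have hmatrix := congrArg (fun v => v.2.2) hg
  have h₁ : g 1 = 0 := by simpa using congrArg (fun v => v.2.1) hg
  have h₂ : g 2 = 0 := by simpa [Matrix.single_apply] using congrFun₂ hmatrix 0 1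
  have h₃ : g 3 = 0 := by simpa [Matrix.single_apply] using congrFun₂ hmatrix 0 2
  have h₄ : g 4 = 0 := by simpa [Matrix.single_apply] using congrFun₂ hmatrix 1 2
  have h₀ : g 0 = 0 := by simpa [h₁, hp] using congrArg Prod.fst hg
  simp [Fin.forall_fin_succ, h₀, h₁, h₂, h₃, h₄]

end CircuitFrame

theorem not_free_derivModule_of_circuit {ι : Type} [Finite ι] {α : ι → Fin 4 → ℂ}
    {p : Fin 4 → ℂ} (hp : p ≠ 0) {e : Fin 4 → ι} (he : ∀ H, α H ⬝ᵥ p = 0 ↔ H ∈ Set.range e)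
    (hind : LinearIndependent ℂ fun j : Fin 3 => α (e j.succ)) {c : Fin 3 → ℂ}
    (hc : ∀ j, c j ≠ 0) (hrel : α (e 0) = ∑ j, c j • α (e j.succ)) :
    ¬ Module.Free S4 (derivModule α) := by
  intro hfree
  obtain ⟨F⟩ := CircuitFrame.nonempty_of_linearIndependent (β := α ∘ e)
    (fun j => (he _).mpr ⟨j.succ, rfl⟩) hind hc hrel
  obtain ⟨m, hm⟩ := F.exists_linearIndependent_fibreMap hp
  obtain ⟨s, hs, hsmul⟩ := exists_smul_mem_derivModule_of_mem_comp fun H => (he H).mp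
  have hfive : Fintype.card (Fin 5) ≤ Module.finrank S4 (derivModule α) :=
    card_le_finrank_of_smul_mem (derivModule_le_comp e) hs hsmul F.fibreMap hm
  have hfour : Module.finrank S4 (derivModule α) ≤ 4 := by
    simpa using Submodule.finrank_le (derivModule α)
  rw [Fintype.card_fin] at hfive
  lia

/-- The derivation module of 𝒜₂₃₈ is not a free `S`-module. -/
theorem not_free_A238 : ¬ Module.Free S4 ↥(derivModule A238) := by
  refine not_free_derivModule_of_circuit (p := ![0, 0, 1, 1]) (e := ![5, 0, 1, 4])
    (c := ![2, 2, -1]) (by simp) (fun H => ?_) ?_ (fun j => ?_) ?_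
  · fin_cases H <;> simp [A238]
  · rw [Fintype.linearIndependent_iff]
    intro g hg
    rw [Fin.sum_univ_three] at hg
    have h₂ : g 2 = 0 := by simpa [A238] using congrFun hg 2
    have h₁ : g 1 = 0 := by simpa [A238, h₂] using congrFun hg 1
    have h₀ : g 0 = 0 := by simpa [A238, h₂] using congrFun hg 0
    simp [Fin.forall_fin_succ, h₀, h₁, h₂]
  · fin_cases j <;> simp
  · ext i
    rw [Fin.sum_univ_three]
    fin_cases i <;> simp [A238] <;> norm_num
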